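/- arXiv:1305.7212 — 2 statements merged into one kernel-verified Lean document; each statement's English description precedes it below -/
import Mathlib

section
/- A finitely additive measure μ on the positive integers is a density measure if and only if it is 𝒢-invariant, i.e., μ(A) = μ(πA) for every A ⊆ ℕ and every permutation π in the Lévy group 𝒢. -/
open Filter Topology

/-- The counting function `A(n) = |A ∩ [1, n]|`, as a real number. -/
noncomputable def count (A : Set ℕ) (n : ℕ) : ℝ :=
  ((A ∩ Set.Icc 1 n).ncard : ℝ)

/-- `A ⊆ ℕ` has asymptotic density `a`, i.e. `A(n)/n → a`. -/
def HasDensity (A : Set ℕ) (a : ℝ) : Prop :=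
  Filter.Tendsto (fun n : ℕ => count A n / n) Filter.atTop (nhds a)

/-- Membership of a permutation `π` of `ℕ` in the Lévy group `𝒢`:
`|{k : k ≤ n < π(k)}| / n → 0`. -/
def InLevyGroup (π : Equiv.Perm ℕ) : Prop :=
  Filter.Tendsto
    (fun n : ℕ => (({k : ℕ | k ≤ n ∧ n < π k}.ncard : ℝ) / n))
    Filter.atTop (nhds 0)

/-- A finitely additive probability measure defined on all subsets of `ℕ`,
with values in `[0, 1]`. -/
def IsFAMeasure (μ : Set ℕ → ℝ) : Prop :=
  (∀ A : Set ℕ, 0 ≤ μ A) ∧ (∀ A : Set ℕ, μ A ≤ 1) ∧ μ Set.univ = 1 ∧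
    ∀ A B : Set ℕ, Disjoint A B → μ (A ∪ B) = μ A + μ B

/-- A density measure: a finitely additive measure extending asymptotic density. -/
def IsDensityMeasure (μ : Set ℕ → ℝ) : Prop :=
  IsFAMeasure μ ∧ ∀ (A : Set ℕ) (a : ℝ), HasDensity A a → μ A = a

/-- Statistical convergence of a real sequence `x` to `L`: for every `ε > 0`
the set `{n : |x n − L| ≥ ε}` has asymptotic density zero. -/
def StatTendsto (x : ℕ → ℝ) (L : ℝ) : Prop :=
  ∀ ε : ℝ, 0 < ε → HasDensity {n : ℕ | ε ≤ |x n - L|} 0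

/-- The limit of a (bounded) real sequence along an ultrafilter on `ℕ`. -/
noncomputable def ulim (𝒰 : Ultrafilter ℕ) (x : ℕ → ℝ) : ℝ :=
  limUnder (𝒰 : Filter ℕ) x

/-- The number of elements of `A` below `n`, zero included. -/
noncomputable def countBelow (A : Set ℕ) (n : ℕ) : ℕ := (A ∩ Set.Iio n).ncard

lemma countBelow_zero (A : Set ℕ) : countBelow A 0 = 0 := by
  simp [countBelow]

lemma countBelow_succ_of_mem {A : Set ℕ} {n : ℕ} (h : n ∈ A) :
    countBelow A (n + 1) = countBelow A n + 1 := by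
  unfold countBelow
  rw [← Set.ncard_insert_of_notMem (a := n) (by simp) ((Set.finite_Iio n).inter_of_right A)]
  congr 1
  ext x
  simp only [Set.mem_inter_iff, Set.mem_Iio, Set.mem_insert_iff]
  constructor
  · rintro ⟨hx, hn⟩
    by_cases hxn : x = n
    · exact Or.inl hxn
    · exact Or.inr ⟨hx, by omega⟩
  · rintro (rfl | ⟨hx, hn⟩)
    · exact ⟨h, by omega⟩
    · exact ⟨hx, by omega⟩

lemma countBelow_succ_of_notMem {A : Set ℕ} {n : ℕ} (h : n ∉ A) :
    countBelow A (n + 1) = countBelow A n := by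
  unfold countBelow
  congr 1
  ext x
  simp only [Set.mem_inter_iff, Set.mem_Iio]
  constructor
  · rintro ⟨hx, hn⟩
    have hxn : x ≠ n := by rintro rfl; exact h hx
    exact ⟨hx, by omega⟩
  · rintro ⟨hx, hn⟩
    exact ⟨hx, by omega⟩

lemma countBelow_mono (A : Set ℕ) : Monotone (countBelow A) := by
  refine monotone_nat_of_le_succ fun n => ?_
  by_cases h : n ∈ A
  · rw [countBelow_succ_of_mem h]; omega
  · rw [countBelow_succ_of_notMem h]

lemma countBelow_succ_le (A : Set ℕ) (n : ℕ) : countBelow A (n + 1) ≤ countBelow A n + 1 := by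
  by_cases h : n ∈ A
  · rw [countBelow_succ_of_mem h]
  · rw [countBelow_succ_of_notMem h]; omega

lemma countBelow_lt_of_mem {A : Set ℕ} {k n : ℕ} (hk : k ∈ A) (h : k < n) :
    countBelow A k < countBelow A n := by
  have h1 := countBelow_succ_of_mem hk
  have h2 := countBelow_mono A (Nat.succ_le_of_lt h)
  simp only [Nat.succ_eq_add_one] at h2
  omega

lemma countBelow_injOn (A : Set ℕ) : Set.InjOn (countBelow A) A := by
  intro x hx y hy h
  rcases lt_trichotomy x y with hlt | heq | hlt
  · have := countBelow_lt_of_mem hx hlt; omega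
  · exact heq
  · have := countBelow_lt_of_mem hy hlt; omega

lemma countBelow_union {A B : Set ℕ} (h : Disjoint A B) (n : ℕ) :
    countBelow (A ∪ B) n = countBelow A n + countBelow B n := by
  unfold countBelow
  rw [Set.union_inter_distrib_right]
  exact Set.ncard_union_eq (h.mono Set.inter_subset_left Set.inter_subset_left)
    ((Set.finite_Iio n).inter_of_right A) ((Set.finite_Iio n).inter_of_right B)

lemma countBelow_univ (n : ℕ) : countBelow Set.univ n = n := by
  induction n with
  | zero => exact countBelow_zero _
  | succ n ih => rw [countBelow_succ_of_mem (Set.mem_univ n), ih]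

lemma countBelow_add_compl (A : Set ℕ) (n : ℕ) : countBelow A n + countBelow Aᶜ n = n := by
  rw [← countBelow_union disjoint_compl_right, Set.union_compl_self, countBelow_univ]

lemma countBelow_inter_add_diff (A B : Set ℕ) (n : ℕ) :
    countBelow (A ∩ B) n + countBelow (A \ B) n = countBelow A n := by
  rw [← countBelow_union (Set.disjoint_sdiff_right.mono_left Set.inter_subset_right),
    Set.inter_union_sdiff]

lemma abs_count_sub_countBelow_le (A : Set ℕ) (n : ℕ) :
    |count A n - (countBelow A n : ℝ)| ≤ 1 := by
  have h1 : (A ∩ Set.Icc 1 n).ncard ≤ countBelow A (n + 1) :=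
    Set.ncard_le_ncard
      (fun x hx => ⟨hx.1, by have := hx.2.2; simp only [Set.mem_Iio]; omega⟩)
      ((Set.finite_Iio _).inter_of_right A)
  have h2 : countBelow A n ≤ (insert 0 (A ∩ Set.Icc 1 n)).ncard := by
    refine Set.ncard_le_ncard (fun x hx => ?_) (((Set.finite_Icc 1 n).inter_of_right A).insert 0)
    have hxn : x < n := hx.2
    by_cases h0 : x = 0
    · exact Or.inl h0
    · exact Or.inr ⟨hx.1, by omega, by omega⟩
  have h3 := Set.ncard_insert_le 0 (A ∩ Set.Icc 1 n)
  have h4 := countBelow_succ_le A n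
  have h5 : (A ∩ Set.Icc 1 n).ncard ≤ countBelow A n + 1 := by omega
  have h6 : countBelow A n ≤ (A ∩ Set.Icc 1 n).ncard + 1 := by omega
  have h5' : count A n ≤ countBelow A n + 1 := by unfold count; exact_mod_cast h5
  have h6' : (countBelow A n : ℝ) ≤ count A n + 1 := by unfold count; exact_mod_cast h6
  rw [abs_le]
  constructor <;> linarith

/-- A bounded perturbation of `u` does not change the limit of `u n / n`. -/
lemma tendsto_div_of_abs_sub_le {u v : ℕ → ℝ} {C a : ℝ} (h : ∀ n, |u n - v n| ≤ C)
    (hv : Tendsto (fun n : ℕ => v n / n) atTop (𝓝 a)) :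
    Tendsto (fun n : ℕ => u n / n) atTop (𝓝 a) := by
  have h0 : Tendsto (fun n : ℕ => (u n - v n) / n) atTop (𝓝 0) := by
    refine squeeze_zero_norm (fun n => ?_) (tendsto_const_div_atTop_nhds_zero_nat C)
    rw [Real.norm_eq_abs, abs_div, Nat.abs_cast]
    exact div_le_div_of_nonneg_right (h n) (Nat.cast_nonneg n)
  refine (by simpa using hv.add h0 : Tendsto _ _ (𝓝 a)).congr fun n => ?_
  ring

lemma hasDensity_iff_countBelow {A : Set ℕ} {a : ℝ} :
    HasDensity A a ↔ Tendsto (fun n : ℕ => (countBelow A n : ℝ) / n) atTop (𝓝 a) :=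
  ⟨fun h => tendsto_div_of_abs_sub_le
      (fun n => by rw [abs_sub_comm]; exact abs_count_sub_countBelow_le A n) h,
    fun h => tendsto_div_of_abs_sub_le (abs_count_sub_countBelow_le A) h⟩

lemma tendsto_natCast_div_self : Tendsto (fun n : ℕ => (n : ℝ) / n) atTop (𝓝 1) := by
  refine tendsto_const_nhds.congr' ?_
  filter_upwards [eventually_ne_atTop 0] with n hn
  exact (div_self (Nat.cast_ne_zero.mpr hn)).symm

lemma HasDensity.compl {A : Set ℕ} {a : ℝ} (h : HasDensity A a) : HasDensity Aᶜ (1 - a) := by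
  rw [hasDensity_iff_countBelow] at h ⊢
  refine (tendsto_natCast_div_self.sub h).congr fun n => ?_
  have : (countBelow A n : ℝ) + countBelow Aᶜ n = n := by
    exact_mod_cast countBelow_add_compl A n
  rw [← sub_div]
  congr 1
  linarith

lemma HasDensity.union {A B : Set ℕ} {a b : ℝ} (hA : HasDensity A a) (hB : HasDensity B b)
    (h : Disjoint A B) : HasDensity (A ∪ B) (a + b) := by
  rw [hasDensity_iff_countBelow] at hA hB ⊢
  refine (hA.add hB).congr fun n => ?_
  rw [countBelow_union h]
  push_cast
  ring

lemma HasDensity.infinite {A : Set ℕ} {a : ℝ} (h : HasDensity A a) (ha : 0 < a) :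
    A.Infinite := by
  intro hfin
  have h0 : HasDensity A 0 := by
    have hz : Tendsto (fun n : ℕ => (0 : ℝ) / n) atTop (𝓝 0) := by simp
    refine tendsto_div_of_abs_sub_le (C := A.ncard) (fun n => ?_) hz
    rw [sub_zero, count, Nat.abs_cast]
    exact_mod_cast Set.ncard_le_ncard Set.inter_subset_left hfin
  exact ha.ne' (tendsto_nhds_unique h h0)

/-- Every set `A` has a subset whose counting function is `t` times that of `A`, rounded down. -/
lemma exists_subset_countBelow_eq_floor (A : Set ℕ) {t : ℝ} (ht0 : 0 ≤ t) (ht1 : t ≤ 1) :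
    ∃ T ⊆ A, ∀ n, countBelow T n = ⌊t * countBelow A n⌋₊ := by
  refine ⟨{x ∈ A | ⌊t * countBelow A x⌋₊ ≠ ⌊t * countBelow A (x + 1)⌋₊}, fun x hx => hx.1,
    fun n => ?_⟩
  induction n with
  | zero => simp [countBelow_zero]
  | succ n ih =>
    by_cases hn : ⌊t * countBelow A n⌋₊ = ⌊t * countBelow A (n + 1)⌋₊
    · rw [countBelow_succ_of_notMem (fun h => h.2 hn), ih, hn]
    · have hA : n ∈ A := by
        by_contra hA
        exact hn (by rw [countBelow_succ_of_notMem hA])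
      rw [countBelow_succ_of_mem (Set.mem_sep hA hn), ih]
      have hle : ⌊t * countBelow A n⌋₊ ≤ ⌊t * countBelow A (n + 1)⌋₊ := by
        gcongr
        exact countBelow_mono A n.le_succ
      have hge : ⌊t * countBelow A (n + 1)⌋₊ ≤ ⌊t * countBelow A n⌋₊ + 1 := by
        rw [← Nat.floor_add_one (by positivity), countBelow_succ_of_mem hA]
        apply Nat.floor_mono
        push_cast
        linarith
      omega

lemma exists_subset_abs_countBelow_sub_le (A : Set ℕ) {t : ℝ} (ht0 : 0 ≤ t) (ht1 : t ≤ 1) :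
    ∃ T ⊆ A, ∀ n, |(countBelow T n : ℝ) - t * countBelow A n| ≤ 1 := by
  obtain ⟨T, hTA, hT⟩ := exists_subset_countBelow_eq_floor A ht0 ht1
  refine ⟨T, hTA, fun n => ?_⟩
  rw [hT, abs_le]
  have h1 := Nat.floor_le (a := t * (countBelow A n : ℝ)) (by positivity)
  have h2 := Nat.lt_floor_add_one (t * (countBelow A n : ℝ))
  constructor <;> linarith

lemma HasDensity.exists_subset {A : Set ℕ} {a t : ℝ} (h : HasDensity A a) (ht0 : 0 ≤ t)
    (ht1 : t ≤ 1) : ∃ T ⊆ A, HasDensity T (t * a) := by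
  obtain ⟨T, hTA, hT⟩ := exists_subset_abs_countBelow_sub_le A ht0 ht1
  refine ⟨T, hTA, hasDensity_iff_countBelow.mpr (tendsto_div_of_abs_sub_le hT ?_)⟩
  refine ((hasDensity_iff_countBelow.mp h).const_mul t).congr fun n => ?_
  ring

lemma HasDensity.exists_superset {A : Set ℕ} {a b : ℝ} (h : HasDensity A a) (hab : a ≤ b)
    (hb : b < 1) : ∃ B, A ⊆ B ∧ HasDensity B b := by
  have ha : 0 < 1 - a := by linarith
  obtain ⟨T, hTA, hT⟩ := h.compl.exists_subset (t := (b - a) / (1 - a))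
    (div_nonneg (by linarith) ha.le) ((div_le_one ha).mpr (by linarith))
  refine ⟨A ∪ T, Set.subset_union_left, ?_⟩
  convert h.union hT (disjoint_compl_right.mono_right hTA) using 1
  rw [div_mul_cancel₀ _ ha.ne']
  ring

lemma IsFAMeasure.mono {μ : Set ℕ → ℝ} (hμ : IsFAMeasure μ) {A B : Set ℕ} (h : A ⊆ B) :
    μ A ≤ μ B := by
  have h1 := hμ.2.2.2 A (B \ A) Set.disjoint_sdiff_right
  rw [Set.union_sdiff_cancel h] at h1
  linarith [hμ.1 (B \ A)]

lemma IsFAMeasure.add_compl {μ : Set ℕ → ℝ} (hμ : IsFAMeasure μ) (A : Set ℕ) :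
    μ A + μ Aᶜ = 1 := by
  rw [← hμ.2.2.2 A Aᶜ disjoint_compl_right, Set.union_compl_self, hμ.2.2.1]

lemma IsFAMeasure.inter_add_diff {μ : Set ℕ → ℝ} (hμ : IsFAMeasure μ) (A B : Set ℕ) :
    μ (A ∩ B) + μ (A \ B) = μ A := by
  rw [← hμ.2.2.2 _ _ (Set.disjoint_sdiff_right.mono_left Set.inter_subset_right),
    Set.inter_union_sdiff]

lemma IsFAMeasure.empty {μ : Set ℕ → ℝ} (hμ : IsFAMeasure μ) : μ ∅ = 0 := by
  have h := hμ.2.2.2 ∅ ∅ (Set.disjoint_empty ∅)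
  rw [Set.union_empty] at h
  linarith

/-- Sets whose counting functions differ by `o(n)`. -/
def AsympEqual (A B : Set ℕ) : Prop :=
  Tendsto (fun n : ℕ => ((countBelow A n : ℝ) - countBelow B n) / n) atTop (𝓝 0)

lemma HasDensity.asympEqual {A B : Set ℕ} {a : ℝ} (hA : HasDensity A a) (hB : HasDensity B a) :
    AsympEqual A B := by
  have h := (hasDensity_iff_countBelow.mp hA).sub (hasDensity_iff_countBelow.mp hB)
  rw [sub_self] at h
  exact h.congr fun n => (sub_div _ _ _).symm

lemma AsympEqual.symm {A B : Set ℕ} (h : AsympEqual A B) : AsympEqual B A := by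
  have h' := h.neg
  rw [neg_zero] at h'
  exact h'.congr fun n => by ring

lemma hasDensity_half_of_thinned_compl {A B T : Set ℕ} (hAB : Disjoint A B) (h : AsympEqual A B)
    (hTA : Disjoint A T)
    (hT : ∀ n, |(countBelow T n : ℝ) - 1 / 2 * countBelow (A ∪ B)ᶜ n| ≤ 1) :
    HasDensity (A ∪ T) (1 / 2) := by
  rw [hasDensity_iff_countBelow]
  have hlim : Tendsto
      (fun n : ℕ => (1 / 2 * ((n : ℝ) + (countBelow A n - countBelow B n))) / n)
      atTop (𝓝 (1 / 2)) := by
    have h2 := (tendsto_natCast_div_self.add h).const_mul (1 / 2)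
    rw [add_zero, mul_one] at h2
    refine h2.congr fun n => ?_
    ring
  refine tendsto_div_of_abs_sub_le (fun n => ?_) hlim (C := 1)
  have h1 : (countBelow A n : ℝ) + countBelow B n + countBelow (A ∪ B)ᶜ n = n := by
    rw [← Nat.cast_add, ← countBelow_union hAB]
    exact_mod_cast countBelow_add_compl (A ∪ B) n
  have h2 := hT n
  rw [countBelow_union hTA, ← h1]
  push_cast
  convert h2 using 2
  ring

lemma IsDensityMeasure.eq_of_asympEqual_of_disjoint {μ : Set ℕ → ℝ} (hμ : IsDensityMeasure μ)
    {A B : Set ℕ} (hAB : Disjoint A B) (h : AsympEqual A B) : μ A = μ B := by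
  obtain ⟨T, hTs, hT⟩ := exists_subset_abs_countBelow_sub_le (A ∪ B)ᶜ
    (t := 1 / 2) (by norm_num) (by norm_num)
  have hTU : Disjoint (A ∪ B) T := disjoint_compl_right.mono_right hTs
  have hTA : Disjoint A T := hTU.mono_left Set.subset_union_left
  have hTB : Disjoint B T := hTU.mono_left Set.subset_union_right
  have h1 := hμ.2 _ _ (hasDensity_half_of_thinned_compl hAB h hTA hT)
  have h2 := hμ.2 _ _ (hasDensity_half_of_thinned_compl hAB.symm h.symm hTB
    (by rw [Set.union_comm]; exact hT))
  rw [hμ.1.2.2.2 _ _ hTA] at h1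
  rw [hμ.1.2.2.2 _ _ hTB] at h2
  linarith

lemma IsDensityMeasure.eq_of_asympEqual {μ : Set ℕ → ℝ} (hμ : IsDensityMeasure μ)
    {A B : Set ℕ} (h : AsympEqual A B) : μ A = μ B := by
  have hdiff : AsympEqual (A \ B) (B \ A) := by
    refine h.congr fun n => ?_
    rw [← countBelow_inter_add_diff A B, ← countBelow_inter_add_diff B A, Set.inter_comm B A]
    push_cast
    ring
  have h1 := hμ.eq_of_asympEqual_of_disjoint disjoint_sdiff_sdiff hdiff
  rw [← hμ.1.inter_add_diff A B, ← hμ.1.inter_add_diff B A, Set.inter_comm B A, h1]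

lemma finite_setOf_le_and (n : ℕ) (p : ℕ → Prop) : {k : ℕ | k ≤ n ∧ p k}.Finite :=
  (Set.finite_Iic n).subset fun _ hk => hk.1

lemma countBelow_le_countBelow_image_add (π : Equiv.Perm ℕ) (A : Set ℕ) (n : ℕ) :
    countBelow A (n + 1) ≤
      countBelow (π '' A) (n + 1) + {k : ℕ | k ≤ n ∧ n < π k}.ncard := by
  have hpre : (π ⁻¹' (π '' A ∩ Set.Iio (n + 1))).ncard = countBelow (π '' A) (n + 1) := by
    rw [← Equiv.image_symm_eq_preimage]
    exact Set.ncard_image_of_injective _ π.symm.injective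
  have hfin : (π ⁻¹' (π '' A ∩ Set.Iio (n + 1))).Finite :=
    ((Set.finite_Iio _).inter_of_right _).preimage π.injective.injOn
  rw [← hpre]
  refine (Set.ncard_le_ncard (fun k hk => ?_) (hfin.union (finite_setOf_le_and n _))).trans
    (Set.ncard_union_le _ _)
  have hk' : k < n + 1 := hk.2
  by_cases h : π k < n + 1
  · exact Or.inl ⟨Set.mem_image_of_mem π hk.1, h⟩
  · exact Or.inr ⟨by omega, by omega⟩

lemma abs_countBelow_sub_countBelow_image_le (π : Equiv.Perm ℕ) (A : Set ℕ) (n : ℕ) :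
    |(countBelow A (n + 1) : ℝ) - countBelow (π '' A) (n + 1)| ≤
      {k : ℕ | k ≤ n ∧ n < π k}.ncard := by
  have h1 := countBelow_le_countBelow_image_add π A n
  have h2 := countBelow_le_countBelow_image_add π Aᶜ n
  rw [Set.image_compl_eq π.bijective] at h2
  have h3 := countBelow_add_compl A (n + 1)
  have h4 := countBelow_add_compl (π '' A) (n + 1)
  have h5 : countBelow (π '' A) (n + 1) ≤
      countBelow A (n + 1) + {k : ℕ | k ≤ n ∧ n < π k}.ncard := by omega
  have h1' : (countBelow A (n + 1) : ℝ) ≤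
      countBelow (π '' A) (n + 1) + {k : ℕ | k ≤ n ∧ n < π k}.ncard := by exact_mod_cast h1
  have h5' : (countBelow (π '' A) (n + 1) : ℝ) ≤
      countBelow A (n + 1) + {k : ℕ | k ≤ n ∧ n < π k}.ncard := by exact_mod_cast h5
  rw [abs_le]
  constructor <;> linarith

lemma abs_countBelow_succ_sub_le (A : Set ℕ) (n : ℕ) :
    |(countBelow A n : ℝ) - countBelow A (n + 1)| ≤ 1 := by
  have h1 : (countBelow A n : ℝ) ≤ countBelow A (n + 1) := by
    exact_mod_cast countBelow_mono A n.le_succ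
  have h2 : (countBelow A (n + 1) : ℝ) ≤ countBelow A n + 1 := by
    exact_mod_cast countBelow_succ_le A n
  rw [abs_le]
  constructor <;> linarith

lemma abs_countBelow_sub_sub_succ_le (A B : Set ℕ) (n : ℕ) :
    |((countBelow A n : ℝ) - countBelow B n) -
      (countBelow A (n + 1) - countBelow B (n + 1))| ≤ 2 := by
  have hA := abs_le.mp (abs_countBelow_succ_sub_le A n)
  have hB := abs_le.mp (abs_countBelow_succ_sub_le B n)
  rw [abs_le]
  constructor <;> linarith [hA.1, hA.2, hB.1, hB.2]

lemma asympEqual_iff_succ {A B : Set ℕ} :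
    AsympEqual A B ↔ Tendsto
      (fun n : ℕ => ((countBelow A (n + 1) : ℝ) - countBelow B (n + 1)) / n) atTop (𝓝 0) :=
  ⟨fun h => tendsto_div_of_abs_sub_le
      (fun n => by rw [abs_sub_comm]; exact abs_countBelow_sub_sub_succ_le A B n) h,
    fun h => tendsto_div_of_abs_sub_le (abs_countBelow_sub_sub_succ_le A B) h⟩

lemma InLevyGroup.asympEqual_image {π : Equiv.Perm ℕ} (hπ : InLevyGroup π) (A : Set ℕ) :
    AsympEqual A (π '' A) := by
  rw [asympEqual_iff_succ]
  refine squeeze_zero_norm (fun n => ?_) hπ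
  rw [Real.norm_eq_abs, abs_div, Nat.abs_cast]
  exact div_le_div_of_nonneg_right (abs_countBelow_sub_countBelow_image_le π A n)
    (Nat.cast_nonneg n)

lemma Set.Infinite.exists_equiv_countBelow_eq {A B : Set ℕ} (hA : A.Infinite)
    (hB : B.Infinite) :
    ∃ e : A ≃ B, ∀ k : A, countBelow B (e k) = countBelow A k := by
  have key : ∀ {C : Set ℕ}, C.Infinite →
      Function.Bijective (fun k : C => countBelow C k) := by
    intro C hC
    refine ⟨fun x y h => Subtype.ext (countBelow_injOn C x.2 y.2 h), fun m => ?_⟩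
    have hex : ∃ n, m < countBelow C n := by
      obtain ⟨s, hsC, hs⟩ := hC.exists_subset_card_eq (m + 1)
      obtain ⟨N, hN⟩ := s.bddAbove
      refine ⟨N + 1, ?_⟩
      have : (s : Set ℕ).ncard ≤ countBelow C (N + 1) :=
        Set.ncard_le_ncard (fun x hx => ⟨hsC hx, Nat.lt_succ_of_le (hN hx)⟩)
          ((Set.finite_Iio _).inter_of_right C)
      rw [Set.ncard_coe_finset] at this
      omega
    classical
    have hlt := Nat.find_spec hex
    obtain ⟨k, hk⟩ : ∃ k, Nat.find hex = k + 1 := by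
      refine Nat.exists_eq_succ_of_ne_zero fun h0 => ?_
      rw [h0, countBelow_zero] at hlt
      omega
    have hle : ¬ m < countBelow C k := Nat.find_min hex (by omega)
    rw [hk] at hlt
    have hkC : k ∈ C := by
      by_contra hkC
      rw [countBelow_succ_of_notMem hkC] at hlt
      exact hle hlt
    rw [countBelow_succ_of_mem hkC] at hlt
    exact ⟨⟨k, hkC⟩, by simp only; omega⟩
  refine ⟨(Equiv.ofBijective _ (key hA)).trans (Equiv.ofBijective _ (key hB)).symm, fun k => ?_⟩
  exact (Equiv.ofBijective _ (key hB)).apply_symm_apply (countBelow A k)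

lemma ncard_setOf_mem_le_lt_le {A B : Set ℕ} {f : ℕ → ℕ}
    (hf : ∀ k ∈ A, countBelow B (f k) = countBelow A k) (n : ℕ) :
    {k : ℕ | k ≤ n ∧ k ∈ A ∧ n < f k}.ncard ≤
      countBelow A (n + 1) - countBelow B (n + 1) := by
  rw [← Nat.card_Ico, ← Set.ncard_coe_finset]
  refine Set.ncard_le_ncard_of_injOn (countBelow A) (fun k hk => ?_)
    ((countBelow_injOn A).mono fun k hk => hk.2.1) (Finset.finite_toSet _)
  obtain ⟨hkn, hkA, hkf⟩ := hk
  rw [Finset.coe_Ico, Set.mem_Ico]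
  refine ⟨?_, countBelow_lt_of_mem hkA (by omega)⟩
  rw [← hf k hkA]
  exact countBelow_mono B hkf

/-- Asymptotically equal infinite co-infinite sets are exchanged by the Lévy group. -/
lemma AsympEqual.exists_inLevyGroup_image_eq {A B : Set ℕ} (h : AsympEqual A B)
    (hA : A.Infinite) (hA' : Aᶜ.Infinite) (hB : B.Infinite) (hB' : Bᶜ.Infinite) :
    ∃ π : Equiv.Perm ℕ, InLevyGroup π ∧ π '' A = B := by
  classical
  obtain ⟨e, he⟩ := hA.exists_equiv_countBelow_eq hB
  obtain ⟨f, hf⟩ := hA'.exists_equiv_countBelow_eq hB'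
  let π : Equiv.Perm ℕ :=
    (Equiv.Set.sumCompl A).symm.trans ((e.sumCongr f).trans (Equiv.Set.sumCompl B))
  have hπA : ∀ k (hk : k ∈ A), π k = e ⟨k, hk⟩ := by
    intro k hk
    simp [π, Equiv.Set.sumCompl_symm_apply_of_mem hk]
  have hπA' : ∀ k (hk : k ∈ Aᶜ), π k = f ⟨k, hk⟩ := by
    intro k hk
    simp [π, Equiv.Set.sumCompl_symm_apply_of_notMem hk]
  refine ⟨π, ?_, ?_⟩
  · have hbound : ∀ n, ({k : ℕ | k ≤ n ∧ n < π k}.ncard : ℝ) ≤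
        |(countBelow A (n + 1) : ℝ) - countBelow B (n + 1)| := by
      intro n
      have h1 := ncard_setOf_mem_le_lt_le (A := A) (B := B) (f := π)
        (fun k hk => by rw [hπA k hk]; exact he ⟨k, hk⟩) n
      have h2 := ncard_setOf_mem_le_lt_le (A := Aᶜ) (B := Bᶜ) (f := π)
        (fun k hk => by rw [hπA' k hk]; exact hf ⟨k, hk⟩) n
      have h3 := countBelow_add_compl A (n + 1)
      have h4 := countBelow_add_compl B (n + 1)
      have h5 : {k : ℕ | k ≤ n ∧ n < π k}.ncard ≤
          {k : ℕ | k ≤ n ∧ k ∈ A ∧ n < π k}.ncard +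
            {k : ℕ | k ≤ n ∧ k ∈ Aᶜ ∧ n < π k}.ncard := by
        refine (Set.ncard_le_ncard (fun k hk => ?_)
          ((finite_setOf_le_and n _).union (finite_setOf_le_and n _))).trans
          (Set.ncard_union_le _ _)
        by_cases hkA : k ∈ A
        · exact Or.inl ⟨hk.1, hkA, hk.2⟩
        · exact Or.inr ⟨hk.1, hkA, hk.2⟩
      rcases le_total (countBelow A (n + 1)) (countBelow B (n + 1)) with hle | hle
      · have h6 : {k : ℕ | k ≤ n ∧ n < π k}.ncard + countBelow A (n + 1) ≤
            countBelow B (n + 1) := by omega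
        have h7 : ({k : ℕ | k ≤ n ∧ n < π k}.ncard : ℝ) + countBelow A (n + 1) ≤
            countBelow B (n + 1) := by exact_mod_cast h6
        rw [abs_sub_comm]
        exact (by linarith : _ ≤ _).trans (le_abs_self _)
      · have h6 : {k : ℕ | k ≤ n ∧ n < π k}.ncard + countBelow B (n + 1) ≤
            countBelow A (n + 1) := by omega
        have h7 : ({k : ℕ | k ≤ n ∧ n < π k}.ncard : ℝ) + countBelow B (n + 1) ≤
            countBelow A (n + 1) := by exact_mod_cast h6
        exact (by linarith : _ ≤ _).trans (le_abs_self _)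
    have habs := (asympEqual_iff_succ.mp h).abs
    rw [abs_zero] at habs
    refine squeeze_zero (fun n => by positivity) (fun n => ?_) habs
    rw [abs_div, Nat.abs_cast]
    exact div_le_div_of_nonneg_right (hbound n) (Nat.cast_nonneg n)
  · ext y
    constructor
    · rintro ⟨k, hk, rfl⟩
      rw [hπA k hk]
      exact (e ⟨k, hk⟩).2
    · intro hy
      refine ⟨e.symm ⟨y, hy⟩, (e.symm ⟨y, hy⟩).2, ?_⟩
      rw [hπA _ (e.symm ⟨y, hy⟩).2]
      simp

/-- Invariance of a set function under the Lévy group. -/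
def LevyInvariant (μ : Set ℕ → ℝ) : Prop :=
  ∀ (A : Set ℕ) (π : Equiv.Perm ℕ), InLevyGroup π → μ A = μ (π '' A)

lemma LevyInvariant.eq_of_hasDensity {μ : Set ℕ → ℝ} (hμ : LevyInvariant μ) {A B : Set ℕ}
    {a : ℝ} (hA : HasDensity A a) (hB : HasDensity B a) (h0 : 0 < a) (h1 : a < 1) :
    μ A = μ B := by
  have h1' : 0 < 1 - a := by linarith
  obtain ⟨π, hπ, rfl⟩ := (hA.asympEqual hB).exists_inLevyGroup_image_eq (hA.infinite h0)
    (hA.compl.infinite h1') (hB.infinite h0) (hB.compl.infinite h1')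
  exact hμ A π hπ

lemma hasDensity_setOf_mod_eq {N r : ℕ} (hr : r < N) :
    HasDensity {x : ℕ | x % N = r} (1 / N) := by
  have hN : 0 < N := by omega
  have hN' : (0 : ℝ) < N := by exact_mod_cast hN
  have hcount : ∀ n, countBelow {x : ℕ | x % N = r} n =
      n / N + if r < n % N then 1 else 0 := by
    intro n
    have h := Nat.count_modEq_card n hN r
    rw [Nat.mod_eq_of_lt hr] at h
    rw [← h, Nat.count_eq_card_filter_range, ← Set.ncard_coe_finset, countBelow]
    congr 1
    ext x
    simp [Nat.ModEq, Nat.mod_eq_of_lt hr, and_comm]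
  rw [hasDensity_iff_countBelow]
  have hlim : Tendsto (fun n : ℕ => ((n : ℝ) / N) / n) atTop (𝓝 (1 / N)) := by
    refine (tendsto_natCast_div_self.div_const (N : ℝ)).congr fun n => ?_
    ring
  refine tendsto_div_of_abs_sub_le (C := 1) (fun n => ?_) hlim
  have h1 : ((n / N : ℕ) : ℝ) ≤ n / N := Nat.cast_div_le
  have h2 : (n : ℝ) / N < (n / N : ℕ) + 1 := by
    rw [div_lt_iff₀ hN']
    have h3 : n < (n / N + 1) * N := by
      rw [mul_comm]
      exact Nat.lt_mul_div_succ n hN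
    exact_mod_cast h3
  rw [hcount, abs_le]
  split_ifs <;> push_cast <;> constructor <;> linarith

lemma setOf_mod_lt_succ (N j : ℕ) :
    {x : ℕ | x % N < j + 1} = {x : ℕ | x % N < j} ∪ {x : ℕ | x % N = j} := by
  ext x
  simp only [Set.mem_ofPred_eq, Set.mem_union]
  omega

lemma disjoint_setOf_mod_lt_setOf_mod_eq (N j : ℕ) :
    Disjoint {x : ℕ | x % N < j} {x : ℕ | x % N = j} :=
  Set.disjoint_left.mpr fun _ hx hx' => (ne_of_lt hx) hx'

lemma hasDensity_setOf_mod_lt {N j : ℕ} (hj : j ≤ N) :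
    HasDensity {x : ℕ | x % N < j} (j / N) := by
  induction j with
  | zero => simp [HasDensity, count]
  | succ j ih =>
    rw [setOf_mod_lt_succ]
    convert (ih (by omega)).union (hasDensity_setOf_mod_eq (N := N) (r := j) (by omega))
      (disjoint_setOf_mod_lt_setOf_mod_eq N j) using 1
    push_cast
    ring

lemma LevyInvariant.measure_setOf_mod_lt {μ : Set ℕ → ℝ} (hinv : LevyInvariant μ)
    (hμ : IsFAMeasure μ) {N j : ℕ} (hN : 2 ≤ N) (hj : j ≤ N) :
    μ {x : ℕ | x % N < j} = j / N := by
  have hN' : (2 : ℝ) ≤ N := by exact_mod_cast hN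
  have hmul : ∀ i ≤ N, μ {x : ℕ | x % N < i} = i * μ {x : ℕ | x % N = 0} := by
    intro i hi
    induction i with
    | zero => simp [hμ.empty]
    | succ i ih =>
      rw [setOf_mod_lt_succ, hμ.2.2.2 _ _ (disjoint_setOf_mod_lt_setOf_mod_eq N i),
        ih (by omega),
        hinv.eq_of_hasDensity (hasDensity_setOf_mod_eq (N := N) (r := i) (by omega))
          (hasDensity_setOf_mod_eq (N := N) (r := 0) (by omega)) (by positivity)
          ((div_lt_one (by linarith)).mpr (by linarith))]
      push_cast
      ring
  have huniv : {x : ℕ | x % N < N} = Set.univ :=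
    Set.eq_univ_of_forall fun x => Nat.mod_lt x (by omega)
  have hN1 := hmul N le_rfl
  rw [huniv, hμ.2.2.1] at hN1
  rw [hmul j hj, eq_div_iff (by linarith), mul_assoc, mul_comm (μ _), ← hN1, mul_one]

lemma LevyInvariant.measure_eq_ratCast {μ : Set ℕ → ℝ} (hinv : LevyInvariant μ)
    (hμ : IsFAMeasure μ) {A : Set ℕ} {q : ℚ} (hA : HasDensity A q) (h0 : 0 < q) (h1 : q < 1) :
    μ A = q := by
  obtain ⟨j, hj⟩ := Int.eq_ofNat_of_zero_le (Rat.num_nonneg.mpr h0.le)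
  have hq : (q : ℝ) = j / q.den := by
    rw [Rat.cast_def, hj]
    simp
  have hlt : j < q.den := by
    have := Rat.num_lt_denom_iff.mpr h1
    omega
  have hpos : 0 < j := by
    have := Rat.num_pos.mpr h0
    omega
  rw [hq] at hA ⊢
  rw [hinv.eq_of_hasDensity hA (hasDensity_setOf_mod_lt hlt.le)
    (by rw [← hq]; exact_mod_cast h0) (by rw [← hq]; exact_mod_cast h1)]
  exact hinv.measure_setOf_mod_lt hμ (by omega) hlt.le

lemma HasDensity.nonneg {A : Set ℕ} {a : ℝ} (h : HasDensity A a) : 0 ≤ a :=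
  ge_of_tendsto' h fun n => div_nonneg (Nat.cast_nonneg _) (Nat.cast_nonneg n)

lemma LevyInvariant.measure_le {μ : Set ℕ → ℝ} (hinv : LevyInvariant μ)
    (hμ : IsFAMeasure μ) {A : Set ℕ} {a : ℝ} (hA : HasDensity A a) : μ A ≤ a := by
  by_contra! hlt
  obtain ⟨q, haq, hq⟩ := exists_rat_btwn hlt
  have h0 : (0 : ℝ) < q := hA.nonneg.trans_lt haq
  have h1 : (q : ℝ) < 1 := hq.trans_le (hμ.2.1 A)
  obtain ⟨B, hAB, hB⟩ := hA.exists_superset haq.le h1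
  have h2 := hinv.measure_eq_ratCast hμ hB (by exact_mod_cast h0) (by exact_mod_cast h1)
  linarith [hμ.mono hAB]

/-- A finitely additive measure `μ` on `ℕ` is a density measure iff it is
invariant under the Lévy group. -/
theorem isDensityMeasure_iff_levyGroup_invariant
    (μ : Set ℕ → ℝ) (hμ : IsFAMeasure μ) :
    IsDensityMeasure μ ↔
      ∀ (A : Set ℕ) (π : Equiv.Perm ℕ), InLevyGroup π → μ A = μ (π '' A) := by
  constructor
  · intro h A π hπ
    exact h.eq_of_asympEqual (hπ.asympEqual_image A)
  · intro h
    have hinv : LevyInvariant μ := h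
    refine ⟨hμ, fun A a hA => le_antisymm (hinv.measure_le hμ hA) ?_⟩
    linarith [hinv.measure_le hμ hA.compl, hμ.add_compl A]
end

section
/- Let ℱ be a free ultrafilter on the positive integers and let 2ℱ be the ultrafilter with base {2F : F ∈ ℱ}, where 2F = {2k : k ∈ F}. Then the function μ defined by μ(A) = 2·((2ℱ)-lim A(n)/n) − (ℱ-lim A(n)/n) is a density measure. -/
open Filter Topology

/-- Blümlinger's density measure `μ(X) = 2·((2ℱ)-lim X(n)/n) − (ℱ-lim X(n)/n)`. -/
noncomputable def muEx (𝒰 𝒱 : Ultrafilter ℕ) (X : Set ℕ) : ℝ :=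
  2 * ulim 𝒱 (fun n : ℕ => count X n / n) - ulim 𝒰 (fun n : ℕ => count X n / n)

theorem count_nonneg (A : Set ℕ) (n : ℕ) : 0 ≤ count A n := Nat.cast_nonneg _

theorem count_univ (n : ℕ) : count Set.univ n = n := by
  simp [count, Set.ncard_eq_toFinset_card']

theorem count_mono (A : Set ℕ) : Monotone (count A) := fun _ _ h =>
  Nat.cast_le.2 (Set.ncard_le_ncard
    (Set.inter_subset_inter_right _ (Set.Icc_subset_Icc_right h))
    ((Set.finite_Icc _ _).inter_of_right _))

theorem count_union {A B : Set ℕ} (h : Disjoint A B) (n : ℕ) :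
    count (A ∪ B) n = count A n + count B n := by
  simp only [count, Set.union_inter_distrib_right]
  rw [Set.ncard_union_eq (h.mono Set.inter_subset_left Set.inter_subset_left)
    ((Set.finite_Icc _ _).inter_of_right _) ((Set.finite_Icc _ _).inter_of_right _)]
  push_cast
  rfl

theorem count_add_count_compl (A : Set ℕ) (n : ℕ) : count A n + count Aᶜ n = n := by
  rw [← count_union disjoint_compl_right, Set.union_compl_self, count_univ]

theorem count_div_mem_Icc (A : Set ℕ) (n : ℕ) : count A n / n ∈ Set.Icc (0 : ℝ) 1 :=
  ⟨div_nonneg (count_nonneg A n) n.cast_nonneg,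
    div_le_one_of_le₀
      (by linarith [count_add_count_compl A n, count_nonneg Aᶜ n]) n.cast_nonneg⟩

/-- The relative frequencies of a set converge along every ultrafilter. -/
theorem tendsto_ulim_count_div (𝒰 : Ultrafilter ℕ) (A : Set ℕ) :
    Tendsto (fun n : ℕ => count A n / n) 𝒰 (𝓝 (ulim 𝒰 fun n : ℕ => count A n / n)) := by
  obtain ⟨x, -, hx⟩ := (isCompact_Icc (a := (0 : ℝ)) (b := 1)).ultrafilter_le_nhds
    (𝒰.map fun n : ℕ => count A n / n)
    (tendsto_principal.2 (Eventually.of_forall (count_div_mem_Icc A)))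
  exact tendsto_nhds_limUnder ⟨x, hx⟩

/-- `muEx 𝒰 𝒱 A` is the limit along `𝒰` of the relative frequency of `A` in `(n, 2n]`. -/
theorem tendsto_muEx {𝒰 𝒱 : Ultrafilter ℕ} (h : Tendsto (fun k : ℕ => 2 * k) 𝒰 𝒱)
    (A : Set ℕ) :
    Tendsto (fun n : ℕ => (count A (2 * n) - count A n) / n) 𝒰 (𝓝 (muEx 𝒰 𝒱 A)) := by
  refine ((((tendsto_ulim_count_div 𝒱 A).comp h).const_mul 2).sub
    (tendsto_ulim_count_div 𝒰 A)).congr fun n => ?_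
  simp only [Function.comp_apply, Nat.cast_mul, Nat.cast_ofNat]
  rw [sub_div, mul_div_assoc', mul_div_mul_left _ _ (two_ne_zero' ℝ)]

/-- For a free ultrafilter `ℱ` and the ultrafilter `2ℱ` with base
`{2F : F ∈ ℱ}`, the map `A ↦ 2·((2ℱ)-lim A(n)/n) − (ℱ-lim A(n)/n)` is a
density measure. -/
theorem muEx_isDensityMeasure (𝒰 𝒱 : Ultrafilter ℕ)
    (hfree : (𝒰 : Filter ℕ) ≤ Filter.cofinite)
    (h𝒱 : ∀ B : Set ℕ, B ∈ 𝒱 ↔ ∃ F ∈ 𝒰, (fun k : ℕ => 2 * k) '' F ⊆ B) :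
    IsDensityMeasure (muEx 𝒰 𝒱) := by
  have hdouble : Tendsto (fun k : ℕ => 2 * k) 𝒰 𝒱 := fun B hB => by
    obtain ⟨F, hF, hFB⟩ := (h𝒱 B).1 hB
    exact mem_map.2 (mem_of_superset hF (Set.image_subset_iff.1 hFB))
  have hlim := tendsto_muEx hdouble
  have hU : (𝒰 : Filter ℕ) ≤ atTop := Nat.cofinite_eq_atTop ▸ hfree
  have hle (n : ℕ) : n ≤ 2 * n := by omega
  have hdens (A : Set ℕ) (a : ℝ) (hA : HasDensity A a) : muEx 𝒰 𝒱 A = a := by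
    have hA2 : Tendsto (fun n : ℕ => count A (2 * n) / (2 * n : ℕ)) 𝒰 (𝓝 a) :=
      Tendsto.comp hA ((tendsto_atTop_mono hle tendsto_id).mono_left hU)
    have hlimA : Tendsto (fun n : ℕ => (count A (2 * n) - count A n) / n) 𝒰
        (𝓝 (2 * a - a)) := by
      refine ((hA2.const_mul 2).sub (hA.mono_left hU)).congr fun n => ?_
      rw [Nat.cast_mul, Nat.cast_ofNat, sub_div, mul_div_assoc',
        mul_div_mul_left _ _ (two_ne_zero' ℝ)]
    linarith [tendsto_nhds_unique (hlim A) hlimA]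
  have hnonneg (A : Set ℕ) : 0 ≤ muEx 𝒰 𝒱 A :=
    ge_of_tendsto' (hlim A) fun n =>
      div_nonneg (sub_nonneg.2 (count_mono A (hle n))) n.cast_nonneg
  have huniv : muEx 𝒰 𝒱 Set.univ = 1 := by
    refine hdens _ _ (tendsto_const_nhds.congr' ?_)
    filter_upwards [eventually_ne_atTop 0] with n hn
    rw [count_univ, div_self (Nat.cast_ne_zero.2 hn)]
  have hunion (A B : Set ℕ) (hAB : Disjoint A B) :
      muEx 𝒰 𝒱 (A ∪ B) = muEx 𝒰 𝒱 A + muEx 𝒰 𝒱 B := by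
    refine tendsto_nhds_unique (hlim (A ∪ B)) (((hlim A).add (hlim B)).congr fun n => ?_)
    rw [count_union hAB, count_union hAB]
    ring
  refine ⟨⟨hnonneg, fun A => ?_, huniv, hunion⟩, hdens⟩
  have := hunion A Aᶜ disjoint_compl_right
  rw [Set.union_compl_self, huniv] at this
  linarith [hnonneg Aᶜ]
end
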